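/- Let p be a parity for a class of free braids and let β be a braid word in that class such that all classical crossings of β are odd with respect to p and β admits no bigon reduction. Then every braid word β' equal to β in the free braid group FB_n contains a subword (obtained by deleting some letters) that is strongly equivalent to β. -/

import Mathlib

set_option maxHeartbeats 1000000

namespace OneTermBracket

/-- Letters (generators) of free braid words on `n` strands:
`zeta i` is a classical crossing, `tau i` a virtual crossing, `1 ≤ i+1 ≤ n-1`. -/
inductive Letter (n : ℕ) where
  | zeta (i : Fin (n-1))
  | tau  (i : Fin (n-1))
deriving DecidableEq

namespace Letter

def idx {n : ℕ} : Letter n → Fin (n-1)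
  | zeta i => i
  | tau i => i

def isZeta {n : ℕ} : Letter n → Bool
  | zeta _ => true
  | tau _ => false

end Letter

def lo {n : ℕ} (i : Fin (n-1)) : Fin n := ⟨i.1, by have := i.2; omega⟩
def hi {n : ℕ} (i : Fin (n-1)) : Fin n := ⟨i.1 + 1, by have := i.2; omega⟩

/-- The transposition `(i, i+1)` of `{1, …, n}`. -/
def sPerm {n : ℕ} (i : Fin (n-1)) : Equiv.Perm (Fin n) := Equiv.swap (lo i) (hi i)

/-- Each letter acts on positions as the transposition `(i, i+1)`. -/
def transOf {n : ℕ} (g : Letter n) : Equiv.Perm (Fin n) := sPerm g.idx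

/-- The permutation realized by the prefix of length `j` of a braid word,
mapping the top label of a strand to its position at level `j`. -/
def prefPerm {n : ℕ} (w : List (Letter n)) (j : ℕ) : Equiv.Perm (Fin n) :=
  (((w.take j).map transOf).reverse).prod

/-- The permutation `P(β)` of a braid word (top endpoint `k` goes to bottom endpoint `P k`). -/
def permOf {n : ℕ} (w : List (Letter n)) : Equiv.Perm (Fin n) :=
  ((w.map transOf).reverse).prod

/-- The unordered pair of (top labels of the) strands crossing at position `j` of `w`. -/
def strandsAt {n : ℕ} (w : List (Letter n)) (j : ℕ) : Option (Sym2 (Fin n)) :=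
  (w[j]?).map fun g => s((prefPerm w j)⁻¹ (lo g.idx), (prefPerm w j)⁻¹ (hi g.idx))

/-- Component-wise parity determined by a partition `{1,…,n} = N₁ ⊔ N₂` (encoded by
`c : Fin n → Bool`): a classical crossing is odd (`1`) iff its two strands lie in
different parts. Non-classical positions get `0`. -/
def cwParity {n : ℕ} (c : Fin n → Bool) (w : List (Letter n)) (j : ℕ) : ZMod 2 :=
  match w[j]? with
  | some (.zeta i) =>
      if c ((prefPerm w j)⁻¹ (lo i)) = c ((prefPerm w j)⁻¹ (hi i)) then 0 else 1
  | _ => 0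

/-- The defining relations of `F_n` and `FB_n` which do not involve
`ζ_i² = 1` or the classical third Reidemeister move ("strong" moves). -/
inductive RelStrong (n : ℕ) : List (Letter n) → List (Letter n) → Prop
  | tt (i : Fin (n-1)) : RelStrong n [.tau i, .tau i] []
  | virt (i : Fin (n-1)) : RelStrong n [.zeta i, .tau i] [.tau i, .zeta i]
  | far_zz (i j : Fin (n-1)) (h : 2 ≤ Nat.dist i j) :
      RelStrong n [.zeta i, .zeta j] [.zeta j, .zeta i]
  | far_zt (i j : Fin (n-1)) (h : 2 ≤ Nat.dist i j) :
      RelStrong n [.zeta i, .tau j] [.tau j, .zeta i]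
  | far_tt (i j : Fin (n-1)) (h : 2 ≤ Nat.dist i j) :
      RelStrong n [.tau i, .tau j] [.tau j, .tau i]
  | r3v (i j : Fin (n-1)) (h : (j:ℕ) = (i:ℕ) + 1) :
      RelStrong n [.tau i, .tau j, .tau i] [.tau j, .tau i, .tau j]
  | semi (i j : Fin (n-1)) (h : (j:ℕ) = (i:ℕ) + 1) :
      RelStrong n [.tau i, .tau j, .zeta i] [.zeta j, .tau i, .tau j]

/-- The defining relations of `F_n`. -/
inductive RelF (n : ℕ) : List (Letter n) → List (Letter n) → Prop
  | strong {r1 r2} : RelStrong n r1 r2 → RelF n r1 r2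
  | zz (i : Fin (n-1)) : RelF n [.zeta i, .zeta i] []

/-- The defining relations of the free braid group `FB_n`. -/
inductive RelFB (n : ℕ) : List (Letter n) → List (Letter n) → Prop
  | ofF {r1 r2} : RelF n r1 r2 → RelFB n r1 r2
  | r3c (i j : Fin (n-1)) (h : (j:ℕ) = (i:ℕ) + 1) :
      RelFB n [.zeta i, .zeta j, .zeta i] [.zeta j, .zeta i, .zeta j]

/-- One application of a relation from `R` inside a word. -/
def StepOf {n : ℕ} (R : List (Letter n) → List (Letter n) → Prop)
    (w1 w2 : List (Letter n)) : Prop :=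
  ∃ A B r1 r2, R r1 r2 ∧ w1 = A ++ r1 ++ B ∧ w2 = A ++ r2 ++ B

/-- Strong equivalence: all moves of `F_n` except `ζ_i² = 1`. -/
def StrongEq {n : ℕ} (w1 w2 : List (Letter n)) : Prop :=
  Relation.EqvGen (StepOf (RelStrong n)) w1 w2

/-- Equivalence of braid words as elements of `F_n`. -/
def EqF {n : ℕ} (w1 w2 : List (Letter n)) : Prop :=
  Relation.EqvGen (StepOf (RelF n)) w1 w2

/-- Equivalence of braid words as elements of the free braid group `FB_n`. -/
def EqFB {n : ℕ} (w1 w2 : List (Letter n)) : Prop :=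
  Relation.EqvGen (StepOf (RelFB n)) w1 w2

/-- The parity axioms, for a parity `P` defined on the class `C` of braid words.
`P w j` is the parity of the crossing at position `j` of `w` (only classical
positions matter). -/
structure IsParity {n : ℕ} (C : List (Letter n) → Prop)
    (P : List (Letter n) → ℕ → ZMod 2) : Prop where
  /-- Crossings not taking part in a relation keep their parity (part before). -/
  untouched_left : ∀ A B r1 r2, RelFB n r1 r2 →
    C (A ++ r1 ++ B) → C (A ++ r2 ++ B) → ∀ j < A.length,
    P (A ++ r1 ++ B) j = P (A ++ r2 ++ B) j
  /-- Crossings not taking part in a relation keep their parity (part after). -/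
  untouched_right : ∀ A B r1 r2, RelFB n r1 r2 →
    C (A ++ r1 ++ B) → C (A ++ r2 ++ B) → ∀ j < B.length,
    P (A ++ r1 ++ B) (A.length + r1.length + j) = P (A ++ r2 ++ B) (A.length + r2.length + j)
  /-- In commutation-type relations (far commutativity, virtualization), the two
  letters keep their parities. -/
  comm : ∀ A B x y, RelFB n [x, y] [y, x] →
    C (A ++ [x, y] ++ B) → C (A ++ [y, x] ++ B) →
    P (A ++ [x, y] ++ B) A.length = P (A ++ [y, x] ++ B) (A.length + 1) ∧
    P (A ++ [x, y] ++ B) (A.length + 1) = P (A ++ [y, x] ++ B) A.length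
  /-- In a classical second Reidemeister move both crossings have the same parity. -/
  r2c : ∀ A B (i : Fin (n-1)),
    C (A ++ [.zeta i, .zeta i] ++ B) → C (A ++ B) →
    P (A ++ [.zeta i, .zeta i] ++ B) A.length
      = P (A ++ [.zeta i, .zeta i] ++ B) (A.length + 1)
  /-- In a semivirtual move, the classical crossing keeps its parity. -/
  semiv : ∀ A B (i j : Fin (n-1)), (j:ℕ) = (i:ℕ) + 1 →
    C (A ++ [.tau i, .tau j, .zeta i] ++ B) →
    C (A ++ [.zeta j, .tau i, .tau j] ++ B) →
    P (A ++ [.tau i, .tau j, .zeta i] ++ B) (A.length + 2)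
      = P (A ++ [.zeta j, .tau i, .tau j] ++ B) A.length
  /-- In a classical third Reidemeister move the number of odd crossings is even. -/
  r3_even : ∀ A B (i j : Fin (n-1)), (j:ℕ) = (i:ℕ) + 1 →
    C (A ++ [.zeta i, .zeta j, .zeta i] ++ B) →
    C (A ++ [.zeta j, .zeta i, .zeta j] ++ B) →
    P (A ++ [.zeta i, .zeta j, .zeta i] ++ B) A.length
      + P (A ++ [.zeta i, .zeta j, .zeta i] ++ B) (A.length + 1)
      + P (A ++ [.zeta i, .zeta j, .zeta i] ++ B) (A.length + 2) = 0
  /-- In a classical third Reidemeister move, upper/middle/lower crossings on the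
  left correspond to lower/middle/upper crossings on the right with equal parities. -/
  r3_corr : ∀ A B (i j : Fin (n-1)), (j:ℕ) = (i:ℕ) + 1 →
    C (A ++ [.zeta i, .zeta j, .zeta i] ++ B) →
    C (A ++ [.zeta j, .zeta i, .zeta j] ++ B) →
    P (A ++ [.zeta i, .zeta j, .zeta i] ++ B) A.length
      = P (A ++ [.zeta j, .zeta i, .zeta j] ++ B) (A.length + 2) ∧
    P (A ++ [.zeta i, .zeta j, .zeta i] ++ B) (A.length + 1)
      = P (A ++ [.zeta j, .zeta i, .zeta j] ++ B) (A.length + 1) ∧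
    P (A ++ [.zeta i, .zeta j, .zeta i] ++ B) (A.length + 2)
      = P (A ++ [.zeta j, .zeta i, .zeta j] ++ B) A.length

/-- Delete from `w` all classical letters whose parity (given by `par`) is even. -/
def deleteEven {n : ℕ} (w : List (Letter n)) (par : ℕ → ZMod 2) : List (Letter n) :=
  (List.range w.length).filterMap fun j =>
    (w[j]?).bind fun g =>
      match g with
      | .zeta i => if par j = 0 then none else some (.zeta i)
      | .tau i => some (.tau i)

/-- The one-term parity bracket: delete all even classical crossings. -/
def bracket {n : ℕ} (P : List (Letter n) → ℕ → ZMod 2) (w : List (Letter n)) :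
    List (Letter n) :=
  deleteEven w (P w)

/-- Positions of classical crossings of a word. -/
def ZetaPos {n : ℕ} (w : List (Letter n)) : Set ℕ :=
  {j | ∃ i, w[j]? = some (Letter.zeta i)}

/-- The classical crossings at positions `j1 < j2` form a bigon: they lie on the same
pair of strands, and no classical crossing between them lies on either of those strands. -/
def IsBigon {n : ℕ} (w : List (Letter n)) (j1 j2 : ℕ) : Prop :=
  j1 < j2 ∧ j1 ∈ ZetaPos w ∧ j2 ∈ ZetaPos w ∧
  strandsAt w j1 = strandsAt w j2 ∧
  ∀ k, j1 < k → k < j2 → k ∈ ZetaPos w →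
    ∀ e e', strandsAt w j1 = some e → strandsAt w k = some e' → ∀ a ∈ e, a ∉ e'

/-- Delete the letters at two given positions. -/
def delete2 {n : ℕ} (w : List (Letter n)) (j1 j2 : ℕ) : List (Letter n) :=
  (w.eraseIdx (max j1 j2)).eraseIdx (min j1 j2)

/-- One bigon reduction. -/
def BigonStep {n : ℕ} (w w' : List (Letter n)) : Prop :=
  ∃ j1 j2, IsBigon w j1 j2 ∧ w' = delete2 w j1 j2

/-- A word is irreducible if it admits no bigon reduction. -/
def Irreducible {n : ℕ} (w : List (Letter n)) : Prop := ¬ ∃ j1 j2, IsBigon w j1 j2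

/-- Number of classical letters of a word. -/
def countZeta {n : ℕ} (w : List (Letter n)) : ℕ := (w.filter Letter.isZeta).length

/-- `φ` is an isomorphism of the decorated graphs `Γ(w1) ≅ Γ(w2)`, encoded
combinatorially: a bijection of classical crossings preserving the pair of strands
through each crossing, the order of crossings along each strand, and the endpoint
structure (the permutation). -/
structure IsGammaIso {n : ℕ} (w1 w2 : List (Letter n)) (φ : ℕ → ℕ) : Prop where
  maps : ∀ j ∈ ZetaPos w1, φ j ∈ ZetaPos w2
  inj : ∀ j ∈ ZetaPos w1, ∀ j' ∈ ZetaPos w1, φ j = φ j' → j = j'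
  surj : ∀ k ∈ ZetaPos w2, ∃ j ∈ ZetaPos w1, φ j = k
  strands : ∀ j ∈ ZetaPos w1, strandsAt w2 (φ j) = strandsAt w1 j
  order : ∀ j ∈ ZetaPos w1, ∀ j' ∈ ZetaPos w1, j < j' →
    (∃ e e' a, strandsAt w1 j = some e ∧ strandsAt w1 j' = some e' ∧ a ∈ e ∧ a ∈ e') →
    φ j < φ j'
  perm : permOf w1 = permOf w2

/-! ### The groups `F_n` and `FB_n` as presented groups -/

/-- Generators: `Sum.inl i` is the classical generator `ζ_i`,
`Sum.inr i` is the virtual generator `τ_i`. -/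
abbrev GGen (n : ℕ) := Fin (n-1) ⊕ Fin (n-1)

def zg {n : ℕ} (i : Fin (n-1)) : FreeGroup (GGen n) := FreeGroup.of (Sum.inl i)
def tg {n : ℕ} (i : Fin (n-1)) : FreeGroup (GGen n) := FreeGroup.of (Sum.inr i)

/-- The relators of `F_n`. -/
def FRels (n : ℕ) : Set (FreeGroup (GGen n)) :=
  (⋃ i, {zg i * zg i}) ∪ (⋃ i, {tg i * tg i}) ∪
  (⋃ i, {zg i * tg i * (tg i * zg i)⁻¹}) ∪
  (⋃ (i : Fin (n-1)) (j : Fin (n-1)) (_ : 2 ≤ Nat.dist i j),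
    {zg i * zg j * (zg j * zg i)⁻¹, zg i * tg j * (tg j * zg i)⁻¹,
     tg i * tg j * (tg j * tg i)⁻¹}) ∪
  (⋃ (i : Fin (n-1)) (j : Fin (n-1)) (_ : (j:ℕ) = (i:ℕ) + 1),
    {tg i * tg j * tg i * (tg j * tg i * tg j)⁻¹,
     tg i * tg j * zg i * (zg j * tg i * tg j)⁻¹})

/-- The relators of `FB_n`: those of `F_n` together with the classical third
Reidemeister relation. -/
def FBRels (n : ℕ) : Set (FreeGroup (GGen n)) :=
  FRels n ∪
  (⋃ (i : Fin (n-1)) (j : Fin (n-1)) (_ : (j:ℕ) = (i:ℕ) + 1),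
    {zg i * zg j * zg i * (zg j * zg i * zg j)⁻¹})

/-- The group `F_n`. -/
abbrev FGrp (n : ℕ) := PresentedGroup (FRels n)

/-- The free braid group `FB_n`. -/
abbrev FBGrp (n : ℕ) := PresentedGroup (FBRels n)

def zF {n : ℕ} (i : Fin (n-1)) : FGrp n := PresentedGroup.of (Sum.inl i)
def tF {n : ℕ} (i : Fin (n-1)) : FGrp n := PresentedGroup.of (Sum.inr i)

/-- Evaluation of a braid word in `F_n`. -/
def evalF {n : ℕ} (w : List (Letter n)) : FGrp n :=
  (w.map fun g => match g with
    | Letter.zeta i => zF i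
    | Letter.tau i => tF i).prod

/-- For each unordered pair of strands, the mod-2 number of classical letters of `w`
at which these two strands cross (strand labels traced from the top). -/
def crossPar {n : ℕ} : List (Letter n) → Sym2 (Fin n) → ZMod 2
  | [], _ => 0
  | g :: rest, e =>
    (match g with
     | Letter.zeta i => if e = s(lo i, hi i) then (1 : ZMod 2) else 0
     | Letter.tau _ => 0) + crossPar rest (e.map (transOf g))

/-! ### Chord diagrams and the Gaussian parity -/

/-- The setoid on strands given by `SameCycle`; its classes are the orbits of `σ`,
i.e. the components of the closure. -/
def sameCycleSetoid {n : ℕ} (σ : Equiv.Perm (Fin n)) : Setoid (Fin n) :=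
  ⟨σ.SameCycle, ⟨Equiv.Perm.SameCycle.refl σ, Equiv.Perm.SameCycle.symm,
    Equiv.Perm.SameCycle.trans⟩⟩

/-- The rank of a strand in the single cycle of `σ` starting from strand `0`. -/
noncomputable def rankIn {n : ℕ} [NeZero n] (σ : Equiv.Perm (Fin n)) (a : Fin n) : ℕ :=
  ((Function.invFun (fun k : Fin n => (σ ^ (k : ℕ)) 0) a : Fin n) : ℕ)

/-- Coordinates on the core circle of the two endpoints of the chord of the classical
crossing at position `j` (the circle traverses the strands in the cyclic order of `σ`). -/
noncomputable def chordEnds {n : ℕ} [NeZero n] (w : List (Letter n))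
    (σ : Equiv.Perm (Fin n)) (j : ℕ) : ℕ × ℕ :=
  match w[j]? with
  | some (Letter.zeta i) =>
      (rankIn σ ((prefPerm w j)⁻¹ (lo i)) * w.length + j,
       rankIn σ ((prefPerm w j)⁻¹ (hi i)) * w.length + j)
  | _ => (0, 0)

/-- Two chords are linked iff the endpoints of one separate the endpoints of the
other on the core circle. -/
def LinkedChords {n : ℕ} [NeZero n] (w : List (Letter n)) (σ : Equiv.Perm (Fin n))
    (j k : ℕ) : Prop :=
  Xor' (min (chordEnds w σ j).1 (chordEnds w σ j).2 < (chordEnds w σ k).1 ∧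
        (chordEnds w σ k).1 < max (chordEnds w σ j).1 (chordEnds w σ j).2)
       (min (chordEnds w σ j).1 (chordEnds w σ j).2 < (chordEnds w σ k).2 ∧
        (chordEnds w σ k).2 < max (chordEnds w σ j).1 (chordEnds w σ j).2)

/-- The Gaussian parity of the classical crossing at position `j`: the mod-2 number
of chords linked with its chord. Even (`0`) iff linked with evenly many chords. -/
noncomputable def gaussParity {n : ℕ} [NeZero n] (w : List (Letter n))
    (σ : Equiv.Perm (Fin n)) (j : ℕ) : ZMod 2 :=
  (Nat.card {k : ℕ // k < w.length ∧ k ∈ ZetaPos w ∧ k ≠ j ∧ LinkedChords w σ j k} : ZMod 2)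

/-!
Words modulo strong equivalence form a monoid `M`. Trace a pair of strands `e` down a word and
delete the first classical letter met by exactly these two strands: this operation respects strong
equivalence, and deleting the leading letter of `ζ_i y` in this way returns `y`. Hence `M` is
cancellative, and left divisibility by `ζ_i` can be tested and undone inside any word, by deleting
one of its letters.

Van der Waerden's trick then solves the word problem of `F_n`: let `ζ_i` act on the reduced elements
of `M` by removing a left factor `ζ_i` if there is one and by adding it otherwise. This respects the
relations of `F_n`, so applying a word to `1` gives a normal form which depends only on the class of
the word in `F_n` and which is represented by one of its subwords. An irreducible word is its own
normal form. Finally, the bracket carries equality in `FB_n` to equality in `F_n`, deletes letters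
only, and fixes a word all of whose crossings are odd.
-/

section WordMonoid

variable {n : ℕ} {R : List (Letter n) → List (Letter n) → Prop}

theorem map_eq_of_eqvGen_stepOf {β : Type*} (f : List (Letter n) → β)
    (hcons : ∀ g a b, f a = f b → f (g :: a) = f (g :: b))
    (hrel : ∀ r₁ r₂ B, R r₁ r₂ → f (r₁ ++ B) = f (r₂ ++ B))
    {a b : List (Letter n)} (h : Relation.EqvGen (StepOf R) a b) : f a = f b := by
  induction h with
  | rel _ _ h =>
    obtain ⟨A, B, r₁, r₂, hr, rfl, rfl⟩ := h
    induction A with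
    | nil => exact hrel r₁ r₂ B hr
    | cons g A ih => exact hcons g _ _ ih
  | refl => rfl
  | symm _ _ _ ih => exact ih.symm
  | trans _ _ _ _ _ ih₁ ih₂ => exact ih₁.trans ih₂

theorem eqvGen_stepOf_append_append (A B : List (Letter n)) {a b : List (Letter n)}
    (h : Relation.EqvGen (StepOf R) a b) :
    Relation.EqvGen (StepOf R) (A ++ a ++ B) (A ++ b ++ B) := by
  induction h with
  | rel _ _ h =>
    obtain ⟨A', B', r₁, r₂, hr, rfl, rfl⟩ := h
    exact .rel _ _ ⟨A ++ A', B' ++ B, r₁, r₂, hr, by simp, by simp⟩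
  | refl => exact .refl _
  | symm _ _ _ ih => exact .symm _ _ ih
  | trans _ _ _ _ _ ih₁ ih₂ => exact .trans _ _ _ ih₁ ih₂

/-- The congruence on words generated by the relations `R`, in the form used by `StrongEq`, `EqF`
and `EqFB`. -/
def wordCon (R : List (Letter n) → List (Letter n) → Prop) : Con (FreeMonoid (Letter n)) where
  r a b := Relation.EqvGen (StepOf R) a.toList b.toList
  iseqv := ⟨fun _ => .refl _, .symm _ _, .trans _ _ _⟩
  mul' {a b c d} hab hcd := by
    simp only [FreeMonoid.toList_mul]
    exact .trans _ _ _ (by simpa using eqvGen_stepOf_append_append [] c.toList hab)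
      (by simpa using eqvGen_stepOf_append_append b.toList [] hcd)

/-- The monoid of braid words modulo the relations `R`. For `R = RelF n` it is the group `F_n`. -/
abbrev WordMonoid (R : List (Letter n) → List (Letter n) → Prop) : Type := (wordCon R).Quotient

namespace WordMonoid

/-- The class of a braid word modulo the relations `R`. -/
def mk (R : List (Letter n) → List (Letter n) → Prop) (w : List (Letter n)) : WordMonoid R :=
  (FreeMonoid.ofList w : (wordCon R).Quotient)

theorem mk_eq_mk {a b : List (Letter n)} : mk R a = mk R b ↔ Relation.EqvGen (StepOf R) a b :=
  (wordCon R).eq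

theorem mk_surjective : Function.Surjective (mk R) := Quotient.mk_surjective

theorem mk_append (a b : List (Letter n)) : mk R (a ++ b) = mk R a * mk R b := rfl

theorem mk_cons (g : Letter n) (w : List (Letter n)) : mk R (g :: w) = mk R [g] * mk R w := rfl

theorem mk_eq_of_rel {a b : List (Letter n)} (h : R a b) : mk R a = mk R b :=
  mk_eq_mk.2 (.rel _ _ ⟨[], [], a, b, h, by simp, by simp⟩)

end WordMonoid

end WordMonoid

section StrandPairs

variable {n : ℕ} {i j : Fin (n - 1)}

/-- The strands at positions `i` and `i + 1`, which meet at a letter of index `i`. -/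
def strandPair (i : Fin (n - 1)) : Sym2 (Fin n) := s(lo i, hi i)

/-- The positions, after a letter of index `i`, of the two strands which enter it at positions
`e`. -/
def transport (i : Fin (n - 1)) (e : Sym2 (Fin n)) : Sym2 (Fin n) := e.map (sPerm i)

/-- Two pairs of strands have a strand in common. -/
def SharesStrand (e f : Sym2 (Fin n)) : Prop := ∃ a ∈ e, a ∈ f

theorem far_ne (h : 2 ≤ Nat.dist i j) :
    lo i ≠ lo j ∧ lo i ≠ hi j ∧ hi i ≠ lo j ∧ hi i ≠ hi j := by
  simp only [Nat.dist] at h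
  simp only [lo, hi, ne_eq, Fin.mk.injEq]
  omega

theorem sPerm_mul_comm_of_far (h : 2 ≤ Nat.dist i j) : sPerm i * sPerm j = sPerm j * sPerm i := by
  obtain ⟨h₁, h₂, h₃, h₄⟩ := far_ne h
  simp only [sPerm]
  rw [Equiv.mul_swap_eq_swap_mul, Equiv.swap_apply_of_ne_of_ne h₁.symm h₃.symm,
    Equiv.swap_apply_of_ne_of_ne h₂.symm h₄.symm]

theorem adjacent_ne (h : (j : ℕ) = i + 1) :
    lo j = hi i ∧ lo i ≠ hi i ∧ lo i ≠ hi j ∧ hi i ≠ hi j := by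
  simp only [lo, hi, ne_eq, Fin.mk.injEq]
  omega

theorem sPerm_braid (h : (j : ℕ) = i + 1) :
    sPerm i * sPerm j * sPerm i = sPerm j * sPerm i * sPerm j := by
  obtain ⟨hj, h₁, h₂, h₃⟩ := adjacent_ne h
  simp only [sPerm, hj]
  rw [Equiv.swap_mul_swap_mul_swap h₁ h₂, Equiv.swap_comm (lo i), Equiv.swap_comm (hi i) (hi j),
    Equiv.swap_mul_swap_mul_swap h₃.symm h₂.symm, Equiv.swap_comm]

@[simp]
theorem transport_transport (i : Fin (n - 1)) (e : Sym2 (Fin n)) :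
    transport i (transport i e) = e := by
  simp [transport, Sym2.map_map, sPerm]

theorem transport_comm_of_far (h : 2 ≤ Nat.dist i j) (e : Sym2 (Fin n)) :
    transport i (transport j e) = transport j (transport i e) := by
  simp only [transport, Sym2.map_map, ← Equiv.Perm.coe_mul, sPerm_mul_comm_of_far h]

theorem transport_braid (h : (j : ℕ) = i + 1) (e : Sym2 (Fin n)) :
    transport i (transport j (transport i e)) = transport j (transport i (transport j e)) := by
  simp only [transport, Sym2.map_map, ← Equiv.Perm.coe_mul, ← mul_assoc, sPerm_braid h]

theorem transport_eq_iff {e f : Sym2 (Fin n)} : transport i e = f ↔ e = transport i f :=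
  ⟨fun h => by rw [← h, transport_transport], fun h => by rw [h, transport_transport]⟩

@[simp]
theorem transport_strandPair_self (i : Fin (n - 1)) :
    transport i (strandPair i) = strandPair i := by
  simp [transport, strandPair, sPerm, Sym2.eq_swap]

theorem transport_strandPair_of_far (h : 2 ≤ Nat.dist i j) :
    transport i (strandPair j) = strandPair j := by
  obtain ⟨h₁, h₂, h₃, h₄⟩ := far_ne h
  simp [transport, strandPair, sPerm, Equiv.swap_apply_of_ne_of_ne, h₁.symm, h₂.symm, h₃.symm,
    h₄.symm]

theorem transport_transport_strandPair (h : (j : ℕ) = i + 1) :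
    transport i (transport j (strandPair i)) = strandPair j := by
  obtain ⟨hj, h₁, h₂, h₃⟩ := adjacent_ne h
  simp [transport, strandPair, sPerm, hj, Equiv.swap_apply_of_ne_of_ne, h₁, h₂, h₂.symm, h₃.symm]

theorem sharesStrand_self (e : Sym2 (Fin n)) : SharesStrand e e := ⟨_, e.out_fst_mem, e.out_fst_mem⟩

theorem sharesStrand_comm {e f : Sym2 (Fin n)} : SharesStrand e f ↔ SharesStrand f e :=
  exists_congr fun _ => and_comm

theorem sharesStrand_transport_transport (i : Fin (n - 1)) (e f : Sym2 (Fin n)) :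
    SharesStrand (transport i e) (transport i f) ↔ SharesStrand e f := by
  simp [SharesStrand, transport, Sym2.mem_map]

theorem sharesStrand_transport_left (i : Fin (n - 1)) (e f : Sym2 (Fin n)) :
    SharesStrand (transport i e) f ↔ SharesStrand e (transport i f) := by
  rw [← sharesStrand_transport_transport i e, transport_transport]

theorem not_sharesStrand_of_far (h : 2 ≤ Nat.dist i j) :
    ¬ SharesStrand (strandPair i) (strandPair j) := by
  obtain ⟨h₁, h₂, h₃, h₄⟩ := far_ne h
  simp only [SharesStrand, strandPair, Sym2.mem_iff]
  grind

theorem strandPair_ne_of_far (h : 2 ≤ Nat.dist i j) : strandPair i ≠ strandPair j :=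
  fun he => not_sharesStrand_of_far h (he ▸ sharesStrand_self _)

end StrandPairs

section Bigons

variable {n : ℕ}

/-- The two strands which start at positions `e` cross at a classical letter of the word, and
neither of them meets another classical letter before. -/
def MeetsFirst : Sym2 (Fin n) → List (Letter n) → Prop
  | _, [] => False
  | e, .zeta i :: w =>
      e = strandPair i ∨ ¬ SharesStrand e (strandPair i) ∧ MeetsFirst (transport i e) w
  | e, .tau i :: w => MeetsFirst (transport i e) w

/-- Bigons in recursive form: some classical letter has strands which meet first in the rest of the
word, see `exists_isBigon_of_hasBigon`. -/
def HasBigon : List (Letter n) → Prop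
  | [] => False
  | .zeta i :: w => MeetsFirst (strandPair i) w ∨ HasBigon w
  | .tau _ :: w => HasBigon w

theorem meetsFirst_append_of_relStrong {r₁ r₂ : List (Letter n)} (h : RelStrong n r₁ r₂)
    (B : List (Letter n)) (e : Sym2 (Fin n)) :
    MeetsFirst e (r₁ ++ B) = MeetsFirst e (r₂ ++ B) := by
  cases h with
  | tt i => simp [MeetsFirst]
  | virt i => simp [MeetsFirst, transport_eq_iff, sharesStrand_transport_left]
  | far_zz i j h =>
    have hij := not_sharesStrand_of_far h
    have hji := mt sharesStrand_comm.1 hij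
    simp only [List.cons_append, List.nil_append, MeetsFirst, transport_eq_iff,
      sharesStrand_transport_left, transport_strandPair_of_far h,
      transport_strandPair_of_far (Nat.dist_comm i j ▸ h), transport_comm_of_far h]
    grind
  | far_zt i j h =>
    simp [MeetsFirst, transport_eq_iff, sharesStrand_transport_left,
      transport_strandPair_of_far (Nat.dist_comm i j ▸ h), transport_comm_of_far h]
  | far_tt i j h => simp [MeetsFirst, transport_comm_of_far h]
  | r3v i j h => simp [MeetsFirst, transport_braid h]
  | semi i j h =>
    simp [MeetsFirst, transport_eq_iff, sharesStrand_transport_left,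
      transport_transport_strandPair h, transport_braid h]

theorem hasBigon_append_of_relStrong {r₁ r₂ : List (Letter n)} (h : RelStrong n r₁ r₂)
    (B : List (Letter n)) : HasBigon (r₁ ++ B) = HasBigon (r₂ ++ B) := by
  cases h with
  | far_zz i j h =>
    have h' : 2 ≤ Nat.dist j i := Nat.dist_comm i j ▸ h
    simp [HasBigon, MeetsFirst, strandPair_ne_of_far h, strandPair_ne_of_far h',
      not_sharesStrand_of_far h, not_sharesStrand_of_far h', transport_strandPair_of_far h,
      transport_strandPair_of_far h', or_left_comm]
  | far_zt i j h =>
    simp [HasBigon, MeetsFirst, transport_strandPair_of_far (Nat.dist_comm i j ▸ h)]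
  | semi i j h =>
    simp [HasBigon, MeetsFirst, ← transport_transport_strandPair h]
  | _ => simp [HasBigon, MeetsFirst]

theorem hasBigon_eq_of_strongEq {a b : List (Letter n)} (h : StrongEq a b) :
    HasBigon a = HasBigon b := by
  refine congrArg Prod.fst <|
    map_eq_of_eqvGen_stepOf (fun w => (HasBigon w, fun e => MeetsFirst e w)) ?_ ?_ h
  · rintro (i | i) a b hab
    all_goals
      obtain ⟨hB, hM⟩ := Prod.ext_iff.1 hab
      simp only [funext_iff] at hB hM
      simp only [HasBigon, MeetsFirst, hB, hM]
  · intro r₁ r₂ B hr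
    simp only [hasBigon_append_of_relStrong hr, meetsFirst_append_of_relStrong hr]

theorem hasBigon_append_zeta_zeta (A : List (Letter n)) (i : Fin (n - 1)) (B : List (Letter n)) :
    HasBigon (A ++ .zeta i :: .zeta i :: B) := by
  induction A with
  | nil => exact .inl (.inl rfl)
  | cons g A ih =>
    cases g with
    | zeta j => exact .inr ih
    | tau j => exact ih

theorem prefPerm_cons_succ (g : Letter n) (w : List (Letter n)) (j : ℕ) :
    prefPerm (g :: w) (j + 1) = prefPerm w j * transOf g := by
  simp [prefPerm]

theorem strandsAt_cons_zero (g : Letter n) (w : List (Letter n)) :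
    strandsAt (g :: w) 0 = some (strandPair g.idx) := by
  simp [strandsAt, prefPerm, strandPair]

theorem strandsAt_cons_succ (g : Letter n) (w : List (Letter n)) (j : ℕ) :
    strandsAt (g :: w) (j + 1) = (strandsAt w j).map (transport g.idx) := by
  simp [strandsAt, prefPerm_cons_succ, transport, transOf, sPerm, Function.comp_def]

theorem zero_mem_zetaPos_cons (g : Letter n) (w : List (Letter n)) :
    0 ∈ ZetaPos (g :: w) ↔ ∃ i, g = .zeta i := by
  simp [ZetaPos]

theorem succ_mem_zetaPos_cons (g : Letter n) (w : List (Letter n)) (j : ℕ) :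
    j + 1 ∈ ZetaPos (g :: w) ↔ j ∈ ZetaPos w := by
  simp [ZetaPos]

/-- The classical letter at position `j` realizes `MeetsFirst e w`. -/
def IsFirstMeeting (e : Sym2 (Fin n)) (w : List (Letter n)) (j : ℕ) : Prop :=
  j ∈ ZetaPos w ∧ strandsAt w j = some e ∧
    ∀ k < j, k ∈ ZetaPos w → ∀ f, strandsAt w k = some f → ¬ SharesStrand e f

theorem IsFirstMeeting.cons (g : Letter n) {e : Sym2 (Fin n)} {w : List (Letter n)} {j : ℕ}
    (h : IsFirstMeeting (transport g.idx e) w j)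
    (hg : ∀ i, g = .zeta i → ¬ SharesStrand e (strandPair i)) :
    IsFirstMeeting e (g :: w) (j + 1) := by
  obtain ⟨hj, he, hk⟩ := h
  refine ⟨(succ_mem_zetaPos_cons g w j).2 hj, by simp [strandsAt_cons_succ, he], ?_⟩
  rintro (_ | k) hkj hz f hf
  · obtain ⟨i, rfl⟩ := (zero_mem_zetaPos_cons g w).1 hz
    rw [strandsAt_cons_zero, Option.some_inj] at hf
    exact hf ▸ hg i rfl
  · rw [strandsAt_cons_succ, Option.map_eq_some_iff] at hf
    obtain ⟨f', hf', rfl⟩ := hf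
    rw [← sharesStrand_transport_left]
    exact hk k (by omega) ((succ_mem_zetaPos_cons g w k).1 hz) f' hf'

theorem MeetsFirst.exists_isFirstMeeting {e : Sym2 (Fin n)} {w : List (Letter n)}
    (h : MeetsFirst e w) : ∃ j, IsFirstMeeting e w j := by
  induction w generalizing e with
  | nil => exact h.elim
  | cons g w ih =>
    cases g with
    | zeta i =>
      rcases h with rfl | ⟨hi, h⟩
      · exact ⟨0, (zero_mem_zetaPos_cons _ w).2 ⟨i, rfl⟩, strandsAt_cons_zero _ w, by simp⟩
      · obtain ⟨j, hj⟩ := ih h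
        exact ⟨j + 1, hj.cons (.zeta i) (by rintro _ ⟨⟩; exact hi)⟩
    | tau i =>
      obtain ⟨j, hj⟩ := ih h
      exact ⟨j + 1, hj.cons (.tau i) (by simp)⟩

theorem IsFirstMeeting.isBigon_cons {i : Fin (n - 1)} {w : List (Letter n)} {j : ℕ}
    (h : IsFirstMeeting (strandPair i) w j) : IsBigon (.zeta i :: w) 0 (j + 1) := by
  obtain ⟨hj, he, hk⟩ := h
  refine ⟨j.succ_pos, (zero_mem_zetaPos_cons _ w).2 ⟨i, rfl⟩, (succ_mem_zetaPos_cons _ w j).2 hj,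
    by simp [strandsAt_cons_zero, strandsAt_cons_succ, he, Letter.idx], ?_⟩
  rintro (_ | k) h0 hkj hz e e' h₁ h₂ a ha ha'
  · exact h0.ne rfl
  · rw [strandsAt_cons_zero, Option.some_inj] at h₁
    rw [strandsAt_cons_succ, Option.map_eq_some_iff] at h₂
    obtain ⟨f, hf, rfl⟩ := h₂
    refine hk k (by omega) ((succ_mem_zetaPos_cons _ w k).1 hz) f hf ?_
    rw [← transport_strandPair_self, sharesStrand_transport_left]
    exact ⟨a, h₁ ▸ ha, ha'⟩

theorem IsBigon.cons {w : List (Letter n)} {j k : ℕ} (h : IsBigon w j k) (g : Letter n) :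
    IsBigon (g :: w) (j + 1) (k + 1) := by
  obtain ⟨hjk, hj, hk, he, hm⟩ := h
  refine ⟨by omega, (succ_mem_zetaPos_cons g w j).2 hj, (succ_mem_zetaPos_cons g w k).2 hk,
    by simp only [strandsAt_cons_succ, he], ?_⟩
  rintro (_ | m) hjm hmk hz e e' h₁ h₂
  · omega
  · simp only [strandsAt_cons_succ, Option.map_eq_some_iff] at h₁ h₂
    obtain ⟨f, hf, rfl⟩ := h₁
    obtain ⟨f', hf', rfl⟩ := h₂
    have hff' : ¬ SharesStrand f f' := fun ⟨a, ha, ha'⟩ =>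
      hm m (by omega) (by omega) ((succ_mem_zetaPos_cons g w m).1 hz) f f' hf hf' a ha ha'
    rw [← sharesStrand_transport_transport g.idx] at hff'
    exact fun a ha ha' => hff' ⟨a, ha, ha'⟩

theorem exists_isBigon_of_hasBigon {w : List (Letter n)} (h : HasBigon w) :
    ∃ j k, IsBigon w j k := by
  induction w with
  | nil => exact h.elim
  | cons g w ih =>
    have tail (hw : HasBigon w) : ∃ j k, IsBigon (g :: w) j k :=
      have ⟨j, k, hjk⟩ := ih hw
      ⟨j + 1, k + 1, hjk.cons g⟩
    cases g with
    | zeta i =>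
      rcases h with h | h
      · obtain ⟨j, hj⟩ := h.exists_isFirstMeeting
        exact ⟨0, j + 1, hj.isBigon_cons⟩
      · exact tail h
    | tau i => exact tail h

theorem not_hasBigon_of_irreducible {w : List (Letter n)} (h : Irreducible w) : ¬ HasBigon w :=
  mt exists_isBigon_of_hasBigon h

end Bigons

/-- The monoid of braid words modulo strong equivalence. -/
abbrev StrongMonoid (n : ℕ) : Type := WordMonoid (RelStrong n)

namespace StrongMonoid

open WordMonoid

variable {n : ℕ} {i j : Fin (n - 1)}

section Generators

/-- The class of the classical letter `ζ_i`. -/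
def zeta (i : Fin (n - 1)) : StrongMonoid n := mk _ [.zeta i]

/-- The class of the virtual letter `τ_i`. -/
def tau (i : Fin (n - 1)) : StrongMonoid n := mk _ [.tau i]

theorem mk_zeta_cons (i : Fin (n - 1)) (w : List (Letter n)) :
    mk (RelStrong n) (.zeta i :: w) = zeta i * mk _ w := rfl

theorem mk_tau_cons (i : Fin (n - 1)) (w : List (Letter n)) :
    mk (RelStrong n) (.tau i :: w) = tau i * mk _ w := rfl

@[elab_as_elim]
theorem induction_on {p : StrongMonoid n → Prop} (m : StrongMonoid n) (one : p 1)
    (zeta_mul : ∀ i m, p m → p (zeta i * m)) (tau_mul : ∀ i m, p m → p (tau i * m)) : p m := by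
  obtain ⟨w, rfl⟩ := mk_surjective m
  induction w with
  | nil => exact one
  | cons g w ih =>
    cases g with
    | zeta i => exact zeta_mul i _ ih
    | tau i => exact tau_mul i _ ih

theorem tau_mul_self (i : Fin (n - 1)) : tau i * tau i = 1 := mk_eq_of_rel (.tt i)

theorem zeta_mul_tau_self (i : Fin (n - 1)) : zeta i * tau i = tau i * zeta i :=
  mk_eq_of_rel (.virt i)

theorem zeta_mul_zeta_of_far (h : 2 ≤ Nat.dist i j) : zeta i * zeta j = zeta j * zeta i :=
  mk_eq_of_rel (.far_zz i j h)

theorem zeta_mul_tau_of_far (h : 2 ≤ Nat.dist i j) : zeta i * tau j = tau j * zeta i :=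
  mk_eq_of_rel (.far_zt i j h)

theorem tau_mul_tau_of_far (h : 2 ≤ Nat.dist i j) : tau i * tau j = tau j * tau i :=
  mk_eq_of_rel (.far_tt i j h)

theorem tau_braid (h : (j : ℕ) = i + 1) : tau i * tau j * tau i = tau j * tau i * tau j :=
  mk_eq_of_rel (.r3v i j h)

theorem tau_mul_tau_mul_zeta (h : (j : ℕ) = i + 1) :
    tau i * tau j * zeta i = zeta j * (tau i * tau j) :=
  mk_eq_of_rel (.semi i j h)

theorem isUnit_tau (i : Fin (n - 1)) : IsUnit (tau i) :=
  ⟨⟨tau i, tau i, tau_mul_self i, tau_mul_self i⟩, rfl⟩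

theorem tau_mul_tau_mul (i : Fin (n - 1)) (m : StrongMonoid n) : tau i * (tau i * m) = m := by
  rw [← mul_assoc, tau_mul_self, one_mul]

theorem zeta_mul_tau_mul_tau (h : (j : ℕ) = i + 1) :
    zeta i * (tau j * tau i) = tau j * tau i * zeta j := by
  have hinv : tau i * tau j * (tau j * tau i) = 1 := by
    rw [mul_assoc, tau_mul_tau_mul, tau_mul_self]
  have hinv' : tau j * tau i * (tau i * tau j) = 1 := by
    rw [mul_assoc, tau_mul_tau_mul, tau_mul_self]
  calc zeta i * (tau j * tau i)
      = tau j * tau i * (tau i * tau j * zeta i) * (tau j * tau i) := by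
        rw [← mul_assoc _ _ (zeta i), hinv', one_mul]
    _ = tau j * tau i * zeta j := by
        rw [tau_mul_tau_mul_zeta h, mul_assoc, mul_assoc (zeta j), hinv, mul_one]

end Generators

section Erase

/-- Delete from a word the first classical letter at which exactly the two strands starting at
positions `e` cross, if there is one. -/
def eraseCrossing : Sym2 (Fin n) → List (Letter n) → List (Letter n)
  | _, [] => []
  | e, .zeta i :: w => if e = strandPair i then w else .zeta i :: eraseCrossing (transport i e) w
  | e, .tau i :: w => .tau i :: eraseCrossing (transport i e) w

theorem eraseCrossing_sublist (e : Sym2 (Fin n)) (w : List (Letter n)) :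
    (eraseCrossing e w).Sublist w := by
  induction w generalizing e with
  | nil => exact List.Sublist.refl _
  | cons g w ih =>
    cases g with
    | zeta i =>
      rw [eraseCrossing]
      split_ifs
      · exact List.sublist_cons_self _ w
      · exact (ih _).cons_cons _
    | tau i => exact (ih _).cons_cons _

theorem mk_eraseCrossing_append_of_relStrong {r₁ r₂ : List (Letter n)} (h : RelStrong n r₁ r₂)
    (B : List (Letter n)) (e : Sym2 (Fin n)) :
    mk (RelStrong n) (eraseCrossing e (r₁ ++ B)) = mk _ (eraseCrossing e (r₂ ++ B)) := by
  cases h with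
  | tt i => simp [eraseCrossing, mk_tau_cons, tau_mul_tau_mul]
  | virt i =>
    simp only [List.cons_append, List.nil_append, eraseCrossing, transport_eq_iff,
      transport_strandPair_self]
    split_ifs
    · rfl
    · simp only [mk_zeta_cons, mk_tau_cons, ← mul_assoc, zeta_mul_tau_self]
  | far_zz i j h =>
    have h' : 2 ≤ Nat.dist j i := Nat.dist_comm i j ▸ h
    simp only [List.cons_append, List.nil_append, eraseCrossing, transport_eq_iff,
      transport_strandPair_of_far h, transport_strandPair_of_far h']
    split_ifs with hi hj
    · exact (strandPair_ne_of_far h (hi.symm.trans hj)).elim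
    · rfl
    · rfl
    · simp only [mk_zeta_cons, ← mul_assoc, zeta_mul_zeta_of_far h, transport_comm_of_far h]
  | far_zt i j h =>
    simp only [List.cons_append, List.nil_append, eraseCrossing, transport_eq_iff,
      transport_strandPair_of_far (Nat.dist_comm i j ▸ h)]
    split_ifs
    · rfl
    · simp only [mk_zeta_cons, mk_tau_cons, ← mul_assoc, zeta_mul_tau_of_far h,
        transport_comm_of_far h]
  | far_tt i j h =>
    simp only [List.cons_append, List.nil_append, eraseCrossing, mk_tau_cons, ← mul_assoc,
      tau_mul_tau_of_far h, transport_comm_of_far h]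
  | r3v i j h =>
    simp only [List.cons_append, List.nil_append, eraseCrossing, mk_tau_cons, ← mul_assoc,
      tau_braid h, transport_braid h]
  | semi i j h =>
    simp only [List.cons_append, List.nil_append, eraseCrossing, transport_eq_iff,
      transport_transport_strandPair h]
    split_ifs
    · rfl
    · simp only [mk_zeta_cons, mk_tau_cons, ← mul_assoc, tau_mul_tau_mul_zeta h,
        transport_braid h]

theorem mk_eraseCrossing_eq_of_strongEq {a b : List (Letter n)} (h : StrongEq a b)
    (e : Sym2 (Fin n)) : mk (RelStrong n) (eraseCrossing e a) = mk _ (eraseCrossing e b) := by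
  refine congrFun (congrArg Prod.snd <| map_eq_of_eqvGen_stepOf
    (fun w => (mk (RelStrong n) w, fun e => mk (RelStrong n) (eraseCrossing e w))) ?_ ?_ h) e
  · intro g a b hab
    obtain ⟨hmk, herase⟩ := Prod.ext_iff.1 hab
    simp only [funext_iff] at hmk herase
    refine Prod.ext (by rw [mk_cons g a, mk_cons g b, hmk]) (funext fun e => ?_)
    cases g with
    | zeta i =>
      simp only [eraseCrossing]
      split_ifs
      · exact hmk
      · simp only [mk_zeta_cons, herase]
    | tau i => simp only [eraseCrossing, mk_tau_cons, herase]
  · intro r₁ r₂ B hr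
    refine Prod.ext ?_ (funext (mk_eraseCrossing_append_of_relStrong hr B))
    simp only [mk_append, mk_eq_of_rel hr]

/-- The operation induced by `eraseCrossing` on words modulo strong equivalence. -/
def erase (e : Sym2 (Fin n)) (m : StrongMonoid n) : StrongMonoid n :=
  Con.liftOn m (fun w => mk _ (eraseCrossing e w.toList))
    fun _ _ h => mk_eraseCrossing_eq_of_strongEq h e

theorem erase_mk (e : Sym2 (Fin n)) (w : List (Letter n)) :
    erase e (mk _ w) = mk _ (eraseCrossing e w) := rfl

theorem erase_zeta_mul (e : Sym2 (Fin n)) (i : Fin (n - 1)) (m : StrongMonoid n) :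
    erase e (zeta i * m) =
      if e = strandPair i then m else zeta i * erase (transport i e) m := by
  obtain ⟨w, rfl⟩ := mk_surjective m
  rw [← mk_zeta_cons, erase_mk, eraseCrossing]
  split_ifs <;> rfl

theorem erase_tau_mul (e : Sym2 (Fin n)) (i : Fin (n - 1)) (m : StrongMonoid n) :
    erase e (tau i * m) = tau i * erase (transport i e) m := by
  obtain ⟨w, rfl⟩ := mk_surjective m
  rfl

theorem erase_strandPair_zeta_mul (i : Fin (n - 1)) (m : StrongMonoid n) :
    erase (strandPair i) (zeta i * m) = m := by
  rw [erase_zeta_mul, if_pos rfl]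

theorem erase_mul_cases (e : Sym2 (Fin n)) (a : StrongMonoid n) :
    (∀ x, erase e (a * x) = erase e a * x) ∨ ∃ f, ∀ x, erase e (a * x) = a * erase f x := by
  induction a using induction_on generalizing e with
  | one => exact .inr ⟨e, fun x => by simp only [one_mul]⟩
  | zeta_mul i m ih =>
    by_cases he : e = strandPair i
    · subst he
      exact .inl fun x => by simp only [mul_assoc, erase_strandPair_zeta_mul]
    · refine (ih (transport i e)).imp (fun h x => ?_) fun ⟨f, h⟩ => ⟨f, fun x => ?_⟩ <;>
        simp only [mul_assoc, erase_zeta_mul, if_neg he, h]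
  | tau_mul i m ih =>
    refine (ih (transport i e)).imp (fun h x => ?_) fun ⟨f, h⟩ => ⟨f, fun x => ?_⟩ <;>
      simp only [mul_assoc, erase_tau_mul, h]

end Erase

section Cancellation

theorem mk_reverse_eq_of_relStrong {r₁ r₂ : List (Letter n)} (h : RelStrong n r₁ r₂) :
    mk (RelStrong n) r₁.reverse = mk _ r₂.reverse := by
  cases h with
  | tt i => exact mk_eq_of_rel (.tt i)
  | virt i => exact (zeta_mul_tau_self i).symm
  | far_zz i j h => exact (zeta_mul_zeta_of_far h).symm
  | far_zt i j h => exact (zeta_mul_tau_of_far h).symm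
  | far_tt i j h => exact (tau_mul_tau_of_far h).symm
  | r3v i j h => exact tau_braid h
  | semi i j h => exact zeta_mul_tau_mul_tau h

theorem mk_reverse_eq_of_strongEq {a b : List (Letter n)} (h : StrongEq a b) :
    mk (RelStrong n) a.reverse = mk _ b.reverse := by
  refine map_eq_of_eqvGen_stepOf (fun w => mk (RelStrong n) w.reverse) ?_ ?_ h
  · intro g a b hab
    simp only [List.reverse_cons, mk_append, hab]
  · intro r₁ r₂ B hr
    simp only [List.reverse_append, mk_append, mk_reverse_eq_of_relStrong hr]

/-- The anti-automorphism of reading words backwards. It reduces right cancellation to left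
cancellation. -/
def reverse (m : StrongMonoid n) : StrongMonoid n :=
  Con.liftOn m (fun w => mk _ w.toList.reverse) fun _ _ h => mk_reverse_eq_of_strongEq h

theorem reverse_mul (a b : StrongMonoid n) : reverse (a * b) = reverse b * reverse a := by
  obtain ⟨v, rfl⟩ := mk_surjective a
  obtain ⟨w, rfl⟩ := mk_surjective b
  exact congrArg (mk _) List.reverse_append

theorem reverse_reverse (a : StrongMonoid n) : reverse (reverse a) = a := by
  obtain ⟨w, rfl⟩ := mk_surjective a
  exact congrArg (mk _) w.reverse_reverse

instance : IsCancelMul (StrongMonoid n) :=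
  have left_cancel (a b c : StrongMonoid n) (h : a * b = a * c) : b = c := by
    induction a using induction_on with
    | one => simpa only [one_mul] using h
    | zeta_mul i m ih =>
      rw [mul_assoc, mul_assoc] at h
      exact ih (by simpa only [erase_strandPair_zeta_mul] using congrArg (erase (strandPair i)) h)
    | tau_mul i m ih =>
      rw [mul_assoc, mul_assoc] at h
      exact ih ((isUnit_tau i).mul_left_cancel h)
  { mul_left_cancel := left_cancel
    mul_right_cancel a b c h := by
      refine Function.LeftInverse.injective reverse_reverse (left_cancel (reverse a) _ _ ?_)
      simpa only [reverse_mul] using congrArg reverse h }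

end Cancellation

section Action

theorem zeta_dvd_of_dvd_zeta_mul_of_far (h : 2 ≤ Nat.dist i j) {y : StrongMonoid n}
    (hy : zeta j ∣ zeta i * y) : zeta j ∣ y := by
  obtain ⟨z, hz⟩ := hy
  refine ⟨erase (strandPair i) z, ?_⟩
  rw [← erase_strandPair_zeta_mul i y, hz, erase_zeta_mul, if_neg (strandPair_ne_of_far h),
    transport_strandPair_of_far (Nat.dist_comm i j ▸ h)]

/-- No representative of `u` contains two consecutive equal classical letters. -/
def Reduced (u : StrongMonoid n) : Prop := ∀ x i y, u ≠ x * (zeta i * zeta i) * y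

theorem reduced_mk_of_not_hasBigon {w : List (Letter n)} (h : ¬ HasBigon w) :
    Reduced (mk (RelStrong n) w) := by
  rintro x i y hw
  obtain ⟨A, rfl⟩ := mk_surjective x
  obtain ⟨B, rfl⟩ := mk_surjective y
  have hstrong : StrongEq w (A ++ .zeta i :: .zeta i :: B) :=
    mk_eq_mk.1 (hw.trans (by simp only [mk_append, mk_zeta_cons, mul_assoc]))
  exact h (hasBigon_eq_of_strongEq hstrong ▸ hasBigon_append_zeta_zeta A i B)

theorem reduced_one : Reduced (1 : StrongMonoid n) :=
  reduced_mk_of_not_hasBigon (w := []) id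

theorem Reduced.of_mul_left {a u : StrongMonoid n} (h : Reduced (a * u)) : Reduced u := by
  rintro x i y rfl
  exact h (a * x) i y (by simp only [mul_assoc])

theorem Reduced.tau_mul {u : StrongMonoid n} (h : Reduced u) (i : Fin (n - 1)) :
    Reduced (tau i * u) :=
  of_mul_left (a := tau i) (by rwa [tau_mul_tau_mul])

theorem Reduced.not_zeta_dvd {u : StrongMonoid n} (h : Reduced (zeta i * u)) : ¬ zeta i ∣ u := by
  rintro ⟨y, rfl⟩
  exact h 1 i y (by rw [one_mul, mul_assoc])

/-- If `ζ_i` is not a left factor of a reduced `u`, then `ζ_i u` is reduced as well: erasing its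
leading letter from a factorization of it which contains `ζ_j ζ_j` yields such a factorization of
`u`, unless one of these two letters is the one which is erased. -/
theorem Reduced.zeta_mul {u : StrongMonoid n} (h : Reduced u) (hi : ¬ zeta i ∣ u) :
    Reduced (zeta i * u) := by
  intro x j y hu
  have hu' : u = erase (strandPair i) (x * (zeta j * (zeta j * y))) := by
    rw [← erase_strandPair_zeta_mul i u, hu]
    simp only [mul_assoc]
  obtain hx | ⟨e, hx⟩ := erase_mul_cases (strandPair i) x
  · exact h (erase (strandPair i) x) j y (by rw [hu', hx]; simp only [mul_assoc])
  rw [hx, erase_zeta_mul] at hu'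
  split_ifs at hu' with he
  · have hconj : zeta i * x = x * zeta j :=
      mul_right_cancel (b := zeta j * y) (by rw [mul_assoc, ← hu', hu]; simp only [mul_assoc])
    exact hi ⟨x * y, by rw [hu', ← mul_assoc, ← hconj, mul_assoc]⟩
  · rw [erase_zeta_mul, if_neg (by rwa [transport_eq_iff, transport_strandPair_self]),
      transport_transport] at hu'
    exact h x j (erase e y) (hu'.trans (by simp only [mul_assoc]))

open Classical in
/-- The generator `ζ_i` of `F_n` acting on the left: remove a left factor `ζ_i` if there is one,
and add it otherwise. -/
noncomputable def act (i : Fin (n - 1)) (u : StrongMonoid n) : StrongMonoid n :=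
  if zeta i ∣ u then erase (strandPair i) u else zeta i * u

theorem act_zeta_mul (i : Fin (n - 1)) (u : StrongMonoid n) : act i (zeta i * u) = u := by
  rw [act, if_pos (dvd_mul_right _ _), erase_strandPair_zeta_mul]

theorem act_of_not_dvd {u : StrongMonoid n} (h : ¬ zeta i ∣ u) : act i u = zeta i * u := if_neg h

theorem Reduced.act {u : StrongMonoid n} (h : Reduced u) (i : Fin (n - 1)) :
    Reduced (act i u) := by
  by_cases hi : zeta i ∣ u
  · obtain ⟨y, rfl⟩ := hi
    rw [act_zeta_mul]
    exact h.of_mul_left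
  · rw [act_of_not_dvd hi]
    exact h.zeta_mul hi

theorem Reduced.act_act {u : StrongMonoid n} (h : Reduced u) (i : Fin (n - 1)) :
    StrongMonoid.act i (StrongMonoid.act i u) = u := by
  by_cases hi : zeta i ∣ u
  · obtain ⟨y, rfl⟩ := hi
    rw [act_zeta_mul, act_of_not_dvd h.not_zeta_dvd]
  · rw [act_of_not_dvd hi, act_zeta_mul]

theorem act_comm_zeta_mul_of_far (h : 2 ≤ Nat.dist i j) (y : StrongMonoid n) :
    act i (act j (zeta i * y)) = act j (act i (zeta i * y)) := by
  rw [act_zeta_mul]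
  by_cases hj : zeta j ∣ y
  · obtain ⟨x, rfl⟩ := hj
    rw [← mul_assoc, zeta_mul_zeta_of_far h, mul_assoc, act_zeta_mul, act_zeta_mul, act_zeta_mul]
  · have hj' : ¬ zeta j ∣ zeta i * y := mt (zeta_dvd_of_dvd_zeta_mul_of_far h) hj
    rw [act_of_not_dvd hj, act_of_not_dvd hj', ← mul_assoc, ← zeta_mul_zeta_of_far h, mul_assoc,
      act_zeta_mul]

theorem act_comm_of_far (h : 2 ≤ Nat.dist i j) (u : StrongMonoid n) :
    act i (act j u) = act j (act i u) := by
  have h' : 2 ≤ Nat.dist j i := Nat.dist_comm i j ▸ h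
  by_cases hi : zeta i ∣ u
  · obtain ⟨y, rfl⟩ := hi
    exact act_comm_zeta_mul_of_far h y
  by_cases hj : zeta j ∣ u
  · obtain ⟨y, rfl⟩ := hj
    exact (act_comm_zeta_mul_of_far h' y).symm
  have hij : ¬ zeta i ∣ zeta j * u := mt (zeta_dvd_of_dvd_zeta_mul_of_far h') hi
  have hji : ¬ zeta j ∣ zeta i * u := mt (zeta_dvd_of_dvd_zeta_mul_of_far h) hj
  rw [act_of_not_dvd hi, act_of_not_dvd hj, act_of_not_dvd hij, act_of_not_dvd hji, ← mul_assoc,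
    zeta_mul_zeta_of_far h, mul_assoc]

theorem mul_act_of_mul_zeta_eq {t : StrongMonoid n} (ht : IsUnit t)
    (h : t * zeta i = zeta j * t) (u : StrongMonoid n) : t * act i u = act j (t * u) := by
  by_cases hi : zeta i ∣ u
  · obtain ⟨y, rfl⟩ := hi
    rw [act_zeta_mul, ← mul_assoc, h, mul_assoc, act_zeta_mul]
  · have hj : ¬ zeta j ∣ t * u := by
      rintro ⟨z, hz⟩
      obtain ⟨y, rfl⟩ := ht.dvd (a := z)
      exact hi ⟨y, mul_left_cancel (a := t) (by rw [hz, ← mul_assoc, ← mul_assoc, h])⟩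
    rw [act_of_not_dvd hi, act_of_not_dvd hj, ← mul_assoc, h, mul_assoc]

end Action

section NormalForm

/-- The result of applying a word of `F_n` to `1`, where `ζ_i` acts by `act i` and `τ_i` by
multiplication. -/
noncomputable def normalForm : List (Letter n) → StrongMonoid n
  | [] => 1
  | .zeta i :: w => act i (normalForm w)
  | .tau i :: w => tau i * normalForm w

theorem reduced_normalForm (w : List (Letter n)) : Reduced (normalForm w) := by
  induction w with
  | nil => exact reduced_one
  | cons g w ih =>
    cases g with
    | zeta i => exact ih.act i
    | tau i => exact ih.tau_mul i

theorem normalForm_append_of_relF {r₁ r₂ : List (Letter n)} (h : RelF n r₁ r₂)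
    (B : List (Letter n)) : normalForm (r₁ ++ B) = normalForm (r₂ ++ B) := by
  cases h with
  | zz i => exact (reduced_normalForm B).act_act i
  | strong h =>
    cases h with
    | tt i => exact tau_mul_tau_mul i _
    | virt i => exact (mul_act_of_mul_zeta_eq (isUnit_tau i) (zeta_mul_tau_self i).symm _).symm
    | far_zz i j h => exact act_comm_of_far h _
    | far_zt i j h =>
      exact (mul_act_of_mul_zeta_eq (isUnit_tau j) (zeta_mul_tau_of_far h).symm _).symm
    | far_tt i j h =>
      simp only [List.cons_append, List.nil_append, normalForm, ← mul_assoc, tau_mul_tau_of_far h]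
    | r3v i j h =>
      simp only [List.cons_append, List.nil_append, normalForm, ← mul_assoc, tau_braid h]
    | semi i j h =>
      have hconj := mul_act_of_mul_zeta_eq ((isUnit_tau i).mul (isUnit_tau j))
        (tau_mul_tau_mul_zeta h) (normalForm B)
      simpa only [List.cons_append, List.nil_append, normalForm, mul_assoc] using hconj

theorem normalForm_eq_of_eqF {a b : List (Letter n)} (h : EqF a b) :
    normalForm a = normalForm b := by
  refine map_eq_of_eqvGen_stepOf normalForm ?_ (fun _ _ B hr => normalForm_append_of_relF hr B) h
  rintro (i | i) a b hab <;> simp only [normalForm, hab]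

theorem normalForm_of_reduced {w : List (Letter n)} (h : Reduced (mk (RelStrong n) w)) :
    normalForm w = mk _ w := by
  induction w with
  | nil => rfl
  | cons g w ih =>
    have hw := ih (h.of_mul_left (a := mk _ [g]))
    cases g with
    | zeta i => rw [normalForm, hw, act_of_not_dvd h.not_zeta_dvd, mk_zeta_cons]
    | tau i => rw [normalForm, hw, mk_tau_cons]

theorem exists_sublist_mk_eq_normalForm (w : List (Letter n)) :
    ∃ s, s.Sublist w ∧ mk (RelStrong n) s = normalForm w := by
  induction w with
  | nil => exact ⟨[], .refl _, rfl⟩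
  | cons g w ih =>
    obtain ⟨s, hsw, hs⟩ := ih
    cases g with
    | zeta i =>
      by_cases hi : zeta i ∣ normalForm w
      · refine ⟨eraseCrossing (strandPair i) s, ((eraseCrossing_sublist _ s).trans hsw).cons _, ?_⟩
        rw [← erase_mk, hs, normalForm, act, if_pos hi]
      · refine ⟨.zeta i :: s, hsw.cons_cons _, ?_⟩
        rw [mk_zeta_cons, hs, normalForm, act_of_not_dvd hi]
    | tau i => exact ⟨.tau i :: s, hsw.cons_cons _, by rw [mk_tau_cons, hs, normalForm]⟩

end NormalForm

end StrongMonoid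

section Bracket

open WordMonoid

variable {n : ℕ}

theorem deleteEven_zeta_cons (i : Fin (n - 1)) (w : List (Letter n)) (p : ℕ → ZMod 2) :
    deleteEven (.zeta i :: w) p =
      if p 0 = 0 then deleteEven w fun j => p (j + 1)
      else .zeta i :: deleteEven w fun j => p (j + 1) := by
  simp only [deleteEven, List.length_cons, List.range_succ_eq_map, List.filterMap_cons,
    List.filterMap_map]
  split_ifs <;> simp

theorem deleteEven_tau_cons (i : Fin (n - 1)) (w : List (Letter n)) (p : ℕ → ZMod 2) :
    deleteEven (.tau i :: w) p = .tau i :: deleteEven w fun j => p (j + 1) := by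
  simp [deleteEven, List.range_succ_eq_map, List.filterMap_map]

theorem deleteEven_append (A B : List (Letter n)) (p : ℕ → ZMod 2) :
    deleteEven (A ++ B) p = deleteEven A p ++ deleteEven B fun j => p (A.length + j) := by
  simp only [deleteEven, List.length_append, List.range_add, List.filterMap_append,
    List.filterMap_map]
  congr 1
  · refine List.filterMap_congr fun j hj => ?_
    rw [List.getElem?_append_left (List.mem_range.1 hj)]
  · refine List.filterMap_congr fun j _ => ?_
    simp only [Function.comp_apply]
    rw [List.getElem?_append_right (Nat.le_add_right _ j), Nat.add_sub_cancel_left]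

theorem deleteEven_congr {w : List (Letter n)} {p q : ℕ → ZMod 2} (h : ∀ j < w.length, p j = q j) :
    deleteEven w p = deleteEven w q :=
  List.filterMap_congr fun j hj => by rw [h j (List.mem_range.1 hj)]

theorem deleteEven_sublist (w : List (Letter n)) (p : ℕ → ZMod 2) :
    (deleteEven w p).Sublist w := by
  induction w generalizing p with
  | nil => exact .refl _
  | cons g w ih =>
    cases g with
    | zeta i =>
      rw [deleteEven_zeta_cons]
      split_ifs
      · exact (ih _).cons _
      · exact (ih _).cons_cons _
    | tau i => exact deleteEven_tau_cons i w p ▸ (ih _).cons_cons _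

theorem deleteEven_eq_self {w : List (Letter n)} {p : ℕ → ZMod 2}
    (h : ∀ j (i : Fin (n - 1)), w[j]? = some (.zeta i) → p j ≠ 0) : deleteEven w p = w := by
  induction w generalizing p with
  | nil => rfl
  | cons g w ih =>
    have hw : deleteEven w (fun j => p (j + 1)) = w := ih fun j i hj => h (j + 1) i (by simpa)
    cases g with
    | zeta i => rw [deleteEven_zeta_cons, if_neg (h 0 i rfl), hw]
    | tau i => rw [deleteEven_tau_cons, hw]

theorem mk_deleteEven_swap {x y : Letter n} (h : RelF n [x, y] [y, x]) {p q : ℕ → ZMod 2}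
    (h₀ : p 0 = q 1) (h₁ : p 1 = q 0) :
    mk (RelF n) (deleteEven [x, y] p) = mk _ (deleteEven [y, x] q) := by
  have hxy := mk_eq_of_rel h
  rcases x with i | i <;> rcases y with j | j <;>
    simp only [deleteEven_zeta_cons, deleteEven_tau_cons, zero_add, h₀, h₁]
  any_goals split_ifs
  all_goals first | rfl | exact hxy

theorem mk_deleteEven_zeta_zeta (i : Fin (n - 1)) {p : ℕ → ZMod 2} (h : p 0 = p 1) :
    mk (RelF n) (deleteEven [.zeta i, .zeta i] p) = 1 := by
  simp only [deleteEven_zeta_cons, zero_add, h]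
  split_ifs
  · rfl
  · exact mk_eq_of_rel (.zz i)

theorem mk_deleteEven_semivirtual {i j : Fin (n - 1)} (hij : (j : ℕ) = i + 1) {p q : ℕ → ZMod 2}
    (h : p 2 = q 0) :
    mk (RelF n) (deleteEven [.tau i, .tau j, .zeta i] p) =
      mk _ (deleteEven [.zeta j, .tau i, .tau j] q) := by
  simp only [deleteEven_zeta_cons, deleteEven_tau_cons, zero_add, Nat.reduceAdd, h]
  split_ifs
  · rfl
  · exact mk_eq_of_rel (.strong (.semi i j hij))

/-- Either all three crossings of a third Reidemeister move are even, and disappear, or exactly two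
of them are odd, and the move becomes a trivial one or an instance of `ζ_i² = ζ_j²`. -/
theorem mk_deleteEven_reidemeister_three (i j : Fin (n - 1)) {p q : ℕ → ZMod 2}
    (hsum : p 0 + p 1 + p 2 = 0) (h₀ : p 0 = q 2) (h₁ : p 1 = q 1) (h₂ : p 2 = q 0) :
    mk (RelF n) (deleteEven [.zeta i, .zeta j, .zeta i] p) =
      mk _ (deleteEven [.zeta j, .zeta i, .zeta j] q) := by
  have parities : ∀ a b c : ZMod 2, a + b + c = 0 →
      a = 0 ∧ b = 0 ∧ c = 0 ∨ a = 0 ∧ b = 1 ∧ c = 1 ∨ a = 1 ∧ b = 0 ∧ c = 1 ∨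
        a = 1 ∧ b = 1 ∧ c = 0 := by decide
  have hzz : mk (RelF n) [.zeta i, .zeta i] = mk _ [.zeta j, .zeta j] :=
    (mk_eq_of_rel (.zz i)).trans (mk_eq_of_rel (.zz j)).symm
  simp only [deleteEven_zeta_cons, zero_add, Nat.reduceAdd, ← h₀, ← h₁, ← h₂]
  obtain ⟨h₀, h₁, h₂⟩ | ⟨h₀, h₁, h₂⟩ | ⟨h₀, h₁, h₂⟩ | ⟨h₀, h₁, h₂⟩ := parities _ _ _ hsum <;>
    simp only [h₀, h₁, h₂, if_true, if_false, one_ne_zero]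
  · rfl
  · rfl
  · exact hzz
  · rfl

variable {C : List (Letter n) → Prop} {P : List (Letter n) → ℕ → ZMod 2}

theorem mk_deleteEven_eq_of_relFB (hP : IsParity C P) {r₁ r₂ : List (Letter n)}
    (h : RelFB n r₁ r₂) (A B : List (Letter n)) (h₁ : C (A ++ r₁ ++ B)) (h₂ : C (A ++ r₂ ++ B)) :
    mk (RelF n) (deleteEven r₁ fun j => P (A ++ r₁ ++ B) (A.length + j)) =
      mk _ (deleteEven r₂ fun j => P (A ++ r₂ ++ B) (A.length + j)) := by
  have swap {x y : Letter n} (h : RelF n [x, y] [y, x]) (h₁ : C (A ++ [x, y] ++ B))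
      (h₂ : C (A ++ [y, x] ++ B)) :
      mk (RelF n) (deleteEven [x, y] fun j => P (A ++ [x, y] ++ B) (A.length + j)) =
        mk _ (deleteEven [y, x] fun j => P (A ++ [y, x] ++ B) (A.length + j)) :=
    have ⟨hxy, hyx⟩ := hP.comm A B x y (.ofF h) h₁ h₂
    mk_deleteEven_swap h hxy hyx
  cases h with
  | r3c i j hij =>
    obtain ⟨e₀, e₁, e₂⟩ := hP.r3_corr A B i j hij h₁ h₂
    exact mk_deleteEven_reidemeister_three i j (hP.r3_even A B i j hij h₁ h₂) e₀ e₁ e₂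
  | ofF h =>
    cases h with
    | zz i =>
      exact mk_deleteEven_zeta_zeta i (hP.r2c A B i h₁ (by rwa [List.append_nil] at h₂))
    | strong h =>
      cases h with
      | tt i => exact mk_eq_of_rel (.strong (.tt i))
      | virt i => exact swap (.strong (.virt i)) h₁ h₂
      | far_zz i j h => exact swap (.strong (.far_zz i j h)) h₁ h₂
      | far_zt i j h => exact swap (.strong (.far_zt i j h)) h₁ h₂
      | far_tt i j h => exact swap (.strong (.far_tt i j h)) h₁ h₂
      | r3v i j h => exact mk_eq_of_rel (.strong (.r3v i j h))
      | semi i j h => exact mk_deleteEven_semivirtual h (hP.semiv A B i j h h₁ h₂)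

theorem mk_bracket_eq_of_stepOf (hP : IsParity C P) {a b : List (Letter n)}
    (h : StepOf (RelFB n) a b) (ha : C a) (hb : C b) :
    mk (RelF n) (bracket P a) = mk _ (bracket P b) := by
  obtain ⟨A, B, r₁, r₂, hr, rfl, rfl⟩ := h
  have left := deleteEven_congr (hP.untouched_left A B r₁ r₂ hr ha hb)
  have middle := mk_deleteEven_eq_of_relFB hP hr A B ha hb
  have right := deleteEven_congr (hP.untouched_right A B r₁ r₂ hr ha hb)
  simp only [bracket, deleteEven_append, List.length_append, mk_append, left, middle, right]

theorem bracket_eqF_of_eqFB (hP : IsParity C P)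
    (hC : ∀ a b, StepOf (RelFB n) a b → (C a ↔ C b)) {a b : List (Letter n)} (h : EqFB a b)
    (ha : C a) : EqF (bracket P a) (bracket P b) := by
  suffices (C a ↔ C b) ∧ (C a → mk (RelF n) (bracket P a) = mk _ (bracket P b)) from
    mk_eq_mk.1 (this.2 ha)
  clear ha
  induction h with
  | rel a b h => exact ⟨hC a b h, fun ha => mk_bracket_eq_of_stepOf hP h ha ((hC a b h).1 ha)⟩
  | refl => exact ⟨.rfl, fun _ => rfl⟩
  | symm _ _ _ ih => exact ⟨ih.1.symm, fun hb => (ih.2 (ih.1.2 hb)).symm⟩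
  | trans _ _ _ _ _ ih₁ ih₂ =>
    exact ⟨ih₁.1.trans ih₂.1, fun ha => (ih₁.2 ha).trans (ih₂.2 (ih₁.1.1 ha))⟩

end Bracket

/-- main theorem: if all classical crossings of `β` are odd with
respect to a parity `p` and `β` admits no bigon reduction, then every braid word `β'`
equal to `β` in `FB_n` contains a subword strongly equivalent to `β`. -/
theorem odd_irreducible_reproduces (n : ℕ) (C : List (Letter n) → Prop)
    (P : List (Letter n) → ℕ → ZMod 2)
    (hC : ∀ w1 w2, StepOf (RelFB n) w1 w2 → (C w1 ↔ C w2))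
    (hP : IsParity C P)
    (w : List (Letter n)) (hw : C w)
    (hodd : ∀ j (i : Fin (n-1)), w[j]? = some (Letter.zeta i) → P w j = 1)
    (hirr : Irreducible w) :
    ∀ w' : List (Letter n), EqFB w w' →
      ∃ s : List (Letter n), s.Sublist w' ∧ StrongEq s w := by
  intro w' h
  have hbracket : bracket P w = w :=
    deleteEven_eq_self fun j i hj => (hodd j i hj).trans_ne one_ne_zero
  have hF : EqF (bracket P w') w := .symm _ _ (hbracket ▸ bracket_eqF_of_eqFB hP hC h hw)
  have hreduced := StrongMonoid.reduced_mk_of_not_hasBigon (not_hasBigon_of_irreducible hirr)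
  obtain ⟨s, hs, hnf⟩ := StrongMonoid.exists_sublist_mk_eq_normalForm (bracket P w')
  refine ⟨s, hs.trans (deleteEven_sublist w' (P w')), WordMonoid.mk_eq_mk.1 ?_⟩
  calc WordMonoid.mk (RelStrong n) s
      = StrongMonoid.normalForm (bracket P w') := hnf
    _ = StrongMonoid.normalForm w := StrongMonoid.normalForm_eq_of_eqF hF
    _ = WordMonoid.mk _ w := StrongMonoid.normalForm_of_reduced hreduced

end OneTermBracket
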